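/- Let {(x^k, λ^k)} be generated by Algorithm 1 with arbitrary estimator vectors m̄^k ∈ ℝ^n, step sizes {η_k} ⊂ (0, s_η] (s_η ∈ (0,1)), and barrier parameters {μ_k} ⊂ (0,1]. Then for every k ≥ 0: φ_{μ_k}(x^{k+1}) ≤ φ_{μ_k}(x^k) − η_k‖∇φ_{μ_k}(x^k) + Aᵀλ^k‖_{x^k}^* + 4η_k‖∇f(x^k) − m̄^k‖_{x^k}^* + (L_φ/2)η_k², where L_φ = 2L₁ + 1/(1 − s_η). -/

import Mathlib

open Matrix MeasureTheory ProbabilityTheory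

noncomputable section

/-- The local norm `‖v‖ₓ = (vᵀ ∇²B(x) v)^{1/2}` induced by `H = ∇²B(x)`. -/
def locNorm {n : ℕ} (H : Matrix (Fin n) (Fin n) ℝ) (v : Fin n → ℝ) : ℝ :=
  Real.sqrt (v ⬝ᵥ (H *ᵥ v))

/-- The dual local norm `‖v‖ₓ* = (vᵀ ∇²B(x)⁻¹ v)^{1/2}`. -/
def dualNorm {n : ℕ} (H : Matrix (Fin n) (Fin n) ℝ) (v : Fin n → ℝ) : ℝ :=
  Real.sqrt (v ⬝ᵥ (H⁻¹ *ᵥ v))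

/-- The induced local norm of a matrix: `‖M‖ₓ* = max_{‖v‖ₓ ≤ 1} ‖M v‖ₓ*`. -/
def matDualNorm {n : ℕ} (H M : Matrix (Fin n) (Fin n) ℝ) : ℝ :=
  sSup ((fun v => dualNorm H (M *ᵥ v)) '' {v | locNorm H v ≤ 1})

/-- The strictly feasible region `Ω° = {x ∈ int 𝒦 : A x = b}`. -/
def strictFeas {n m : ℕ} (Kc : Set (Fin n → ℝ)) (A : Matrix (Fin m) (Fin n) ℝ)
    (b : Fin m → ℝ) : Set (Fin n → ℝ) :=
  {x | x ∈ interior Kc ∧ A *ᵥ x = b}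

/-- The perturbed barrier function `φ_μ(x) = f(x) + μ (f(x) + B(x))`. -/
def phiMu {n : ℕ} (f Bf : (Fin n → ℝ) → ℝ) (μ : ℝ) (x : Fin n → ℝ) : ℝ :=
  f x + μ * (f x + Bf x)

/-- The gradient of `φ_μ`: `∇φ_μ(x) = (1+μ) ∇f(x) + μ ∇B(x)`. -/
def gradPhiMu {n : ℕ} (Gf gradB : (Fin n → ℝ) → Fin n → ℝ) (μ : ℝ)
    (x : Fin n → ℝ) : Fin n → ℝ :=
  (1 + μ) • Gf x + μ • gradB x

/-- `Δ(x) = f(x) + [f(x)+B(x)]₊ − 2 [φ_low]₋`. -/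
def DeltaFn {n : ℕ} (f Bf : (Fin n → ℝ) → ℝ) (philow : ℝ) (x : Fin n → ℝ) : ℝ :=
  f x + max (f x + Bf x) 0 - 2 * min philow 0

/-- The σ-algebra generated by the samples `ξ⁰, …, ξᵏ`. -/
def sampleFilt {Θ Ξ : Type} [MeasurableSpace Ξ] (ξ : ℕ → Θ → Ξ) (k : ℕ) :
    MeasurableSpace Θ :=
  ⨆ i ∈ Finset.range (k + 1), MeasurableSpace.comap (ξ i) inferInstance

/-- The σ-algebra generated by the sample batches `𝓑₀, …, 𝓑ₖ`. -/
def batchFilt {Θ Ξ : Type} [MeasurableSpace Ξ] {Bsz : ℕ → ℕ}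
    (ξ : (k : ℕ) → Fin (Bsz k) → Θ → Ξ) (k : ℕ) : MeasurableSpace Θ :=
  ⨆ j ∈ Finset.range (k + 1), ⨆ i, MeasurableSpace.comap (ξ j i) inferInstance

/-!
Write `x⁺ = x + d` for one iteration and `g = m + Aᵀλ` for its search direction. The step
`d = -η H⁻¹g / ‖g‖ₓ*` has local length exactly `η`, attains `g ⬝ᵥ d = -η ‖g‖ₓ*`, and lies in
`ker A` by the choice of `λ`. Since `η ≤ s_η < 1`, the whole segment `[x, x⁺]` lies in the Dikin
ellipsoid and hence in `Ω°`. Along it `∇φ_μ` is Lipschitz in the local norms at `x`, with constant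
`(1 + μ) L₁ + μ / (1 - s_η)`, and the usual quadratic upper bound follows. As `d ∈ ker A`, the
linear term may be computed with `∇φ_μ(x) + Aᵀλ`, which differs from `g` by `(1 + μ) (∇f(x) - m̄)`.
Replacing one by the other costs this error twice: in the pairing with `d` and in the norm.
-/

section LocalNorm

variable {n : ℕ} {H : Matrix (Fin n) (Fin n) ℝ}

theorem norm_toSeminormedAddCommGroup_eq_locNorm (hH : H.PosSemidef) (v : Fin n → ℝ) :
    (H.toSeminormedAddCommGroup hH).norm v = locNorm H v := by
  change √((H *ᵥ v) ⬝ᵥ star v) = locNorm H v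
  rw [star_trivial, dotProduct_comm, locNorm]

theorem inner_toInnerProductSpace_eq_dotProduct (hH : H.PosSemidef) (u v : Fin n → ℝ) :
    (H.toInnerProductSpace hH).inner u v = u ⬝ᵥ H *ᵥ v := by
  change (H *ᵥ v) ⬝ᵥ star u = u ⬝ᵥ H *ᵥ v
  rw [star_trivial, dotProduct_comm]

theorem locNorm_add_le (hH : H.PosSemidef) (u v : Fin n → ℝ) :
    locNorm H (u + v) ≤ locNorm H u + locNorm H v := by
  let := (H.toSeminormedAddCommGroup hH).toSeminormedAddGroup
  simpa only [← norm_toSeminormedAddCommGroup_eq_locNorm hH] using norm_add_le u v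

theorem abs_dotProduct_mulVec_le (hH : H.PosSemidef) (u v : Fin n → ℝ) :
    |u ⬝ᵥ H *ᵥ v| ≤ locNorm H u * locNorm H v := by
  let := H.toSeminormedAddCommGroup hH
  let := H.toInnerProductSpace hH
  simpa only [← norm_toSeminormedAddCommGroup_eq_locNorm hH,
    ← inner_toInnerProductSpace_eq_dotProduct hH] using abs_real_inner_le_norm u v

theorem locNorm_smul (H : Matrix (Fin n) (Fin n) ℝ) (c : ℝ) (v : Fin n → ℝ) :
    locNorm H (c • v) = |c| * locNorm H v := by
  simp only [locNorm, mulVec_smul, smul_dotProduct, dotProduct_smul, smul_eq_mul]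
  rw [← mul_assoc, Real.sqrt_mul (mul_self_nonneg c), Real.sqrt_mul_self_eq_abs]

theorem locNorm_smul_le (H : Matrix (Fin n) (Fin n) ℝ) {t : ℝ} (ht : t ∈ Set.Icc (0 : ℝ) 1)
    (v : Fin n → ℝ) : locNorm H (t • v) ≤ locNorm H v := by
  rw [locNorm_smul, abs_of_nonneg ht.1]
  exact mul_le_of_le_one_left (Real.sqrt_nonneg _) ht.2

theorem dualNorm_eq_locNorm_inv (H : Matrix (Fin n) (Fin n) ℝ) : dualNorm H = locNorm H⁻¹ :=
  rfl

theorem dualNorm_nonneg (H : Matrix (Fin n) (Fin n) ℝ) (v : Fin n → ℝ) : 0 ≤ dualNorm H v :=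
  Real.sqrt_nonneg _

theorem dualNorm_add_le (hH : H.PosSemidef) (u v : Fin n → ℝ) :
    dualNorm H (u + v) ≤ dualNorm H u + dualNorm H v :=
  locNorm_add_le hH.inv u v

theorem dualNorm_smul_of_nonneg (H : Matrix (Fin n) (Fin n) ℝ) {c : ℝ} (hc : 0 ≤ c)
    (v : Fin n → ℝ) : dualNorm H (c • v) = c * dualNorm H v := by
  rw [dualNorm_eq_locNorm_inv, locNorm_smul, abs_of_nonneg hc]

theorem dualNorm_sq (hH : H.PosSemidef) (v : Fin n → ℝ) :
    dualNorm H v ^ 2 = v ⬝ᵥ H⁻¹ *ᵥ v :=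
  Real.sq_sqrt (hH.inv.dotProduct_mulVec_nonneg v)

theorem dualNorm_pos (hH : H.PosDef) {v : Fin n → ℝ} (hv : v ≠ 0) : 0 < dualNorm H v :=
  Real.sqrt_pos.2 (hH.inv.dotProduct_mulVec_pos hv)

theorem mulVec_inv_mulVec {ι R : Type*} [Fintype ι] [DecidableEq ι] [CommRing R]
    {M : Matrix ι ι R} (hM : IsUnit M) (v : ι → R) : M *ᵥ M⁻¹ *ᵥ v = v := by
  rw [mulVec_mulVec, mul_nonsing_inv M ((isUnit_iff_isUnit_det M).1 hM), one_mulVec]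

theorem locNorm_inv_mulVec (hH : IsUnit H) (v : Fin n → ℝ) :
    locNorm H (H⁻¹ *ᵥ v) = dualNorm H v := by
  rw [locNorm, mulVec_inv_mulVec hH, dotProduct_comm, dualNorm]

theorem abs_dotProduct_le_dualNorm_mul_locNorm (hH : H.PosDef) (u v : Fin n → ℝ) :
    |u ⬝ᵥ v| ≤ dualNorm H u * locNorm H v := by
  have h := abs_dotProduct_mulVec_le hH.posSemidef v (H⁻¹ *ᵥ u)
  rwa [mulVec_inv_mulVec hH.isUnit, locNorm_inv_mulVec hH.isUnit, dotProduct_comm, mul_comm] at h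

end LocalNorm

section Descent

theorem image_one_le_of_deriv_le_affine {g g' : ℝ → ℝ} {a c : ℝ}
    (hg : ∀ t ∈ Set.Icc (0 : ℝ) 1, HasDerivAt g (g' t) t)
    (hg' : ∀ t ∈ Set.Icc (0 : ℝ) 1, g' t ≤ a + c * t) : g 1 ≤ g 0 + a + c / 2 := by
  have hquad (t : ℝ) : HasDerivAt (fun t ↦ g 0 + a * t + c / 2 * t ^ 2) (a + c * t) t := by
    refine ((((hasDerivAt_id t).const_mul a).const_add (g 0)).add
      (((hasDerivAt_id t).pow 2).const_mul (c / 2))).congr_deriv ?_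
    simp only [id_eq, Nat.cast_ofNat]
    ring
  have hle := image_le_of_deriv_right_le_deriv_boundary
    (fun t ht ↦ (hg t ht).continuousAt.continuousWithinAt)
    (fun t ht ↦ (hg t (Set.Ico_subset_Icc_self ht)).hasDerivWithinAt) (by simp)
    (fun t _ ↦ (hquad t).continuousAt.continuousWithinAt)
    (fun t _ ↦ (hquad t).hasDerivWithinAt)
    (fun t ht ↦ hg' t (Set.Ico_subset_Icc_self ht)) (Set.right_mem_Icc.2 zero_le_one)
  simpa using hle

variable {n : ℕ} {H : Matrix (Fin n) (Fin n) ℝ} {x d : Fin n → ℝ}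

/-- `φ` is differentiable at `x` with gradient `g`, gradients being taken with respect to the dot
product. Mathlib's `HasGradientAt` is not available here, since `Fin n → ℝ` carries the sup norm. -/
def HasDotGradientAt (φ : (Fin n → ℝ) → ℝ) (g x : Fin n → ℝ) : Prop :=
  ∃ L : (Fin n → ℝ) →L[ℝ] ℝ, HasFDerivAt φ L x ∧ ∀ v, L v = g ⬝ᵥ v

theorem HasDotGradientAt.hasDerivAt_add_smul {φ : (Fin n → ℝ) → ℝ} {g : Fin n → ℝ} {t : ℝ}
    (h : HasDotGradientAt φ g (x + t • d)) :
    HasDerivAt (fun t : ℝ ↦ φ (x + t • d)) (g ⬝ᵥ d) t := by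
  obtain ⟨L, hL, hLg⟩ := h
  have hline : HasDerivAt (fun t : ℝ ↦ x + t • d) d t := by
    simpa using ((hasDerivAt_id t).smul_const d).const_add x
  exact (hL.comp_hasDerivAt t hline).congr_deriv (hLg d)

theorem HasDotGradientAt.phiMu {f B : (Fin n → ℝ) → ℝ} {Gf gradB : (Fin n → ℝ) → Fin n → ℝ}
    (hf : HasDotGradientAt f (Gf x) x) (hB : HasDotGradientAt B (gradB x) x) (μ : ℝ) :
    HasDotGradientAt (phiMu f B μ) (gradPhiMu Gf gradB μ x) x := by
  obtain ⟨Lf, hLf, hLfG⟩ := hf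
  obtain ⟨LB, hLB, hLBG⟩ := hB
  refine ⟨Lf + μ • (Lf + LB), hLf.add ((hLf.add hLB).const_mul μ), fun v ↦ ?_⟩
  change Lf v + μ * (Lf v + LB v) = gradPhiMu Gf gradB μ x ⬝ᵥ v
  rw [hLfG, hLBG, gradPhiMu, add_dotProduct, smul_dotProduct, smul_dotProduct, smul_eq_mul,
    smul_eq_mul]
  ring

theorem le_add_of_dualNorm_gradient_sub_le (hH : H.PosDef) {φ : (Fin n → ℝ) → ℝ}
    {G : (Fin n → ℝ) → Fin n → ℝ} {L : ℝ}
    (hφ : ∀ t ∈ Set.Icc (0 : ℝ) 1, HasDotGradientAt φ (G (x + t • d)) (x + t • d))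
    (hG : ∀ t ∈ Set.Icc (0 : ℝ) 1, dualNorm H (G (x + t • d) - G x) ≤ L * locNorm H (t • d)) :
    φ (x + d) ≤ φ x + G x ⬝ᵥ d + L / 2 * locNorm H d ^ 2 := by
  have hslope : ∀ t ∈ Set.Icc (0 : ℝ) 1,
      G (x + t • d) ⬝ᵥ d ≤ G x ⬝ᵥ d + L * locNorm H d ^ 2 * t := fun t ht ↦
    calc G (x + t • d) ⬝ᵥ d = G x ⬝ᵥ d + (G (x + t • d) - G x) ⬝ᵥ d := by
          rw [sub_dotProduct, add_sub_cancel]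
      _ ≤ G x ⬝ᵥ d + dualNorm H (G (x + t • d) - G x) * locNorm H d := by
          gcongr
          exact le_of_abs_le (abs_dotProduct_le_dualNorm_mul_locNorm hH _ _)
      _ ≤ G x ⬝ᵥ d + L * locNorm H (t • d) * locNorm H d := by
          gcongr
          · exact Real.sqrt_nonneg _
          · exact hG t ht
      _ = G x ⬝ᵥ d + L * locNorm H d ^ 2 * t := by
          rw [locNorm_smul, abs_of_nonneg ht.1]
          ring
  have hdescent := image_one_le_of_deriv_le_affine
    (fun t ht ↦ (hφ t ht).hasDerivAt_add_smul) hslope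
  simp only [one_smul, zero_smul, add_zero] at hdescent
  linarith

theorem phiMu_add_le (hH : H.PosDef) {f B : (Fin n → ℝ) → ℝ}
    {Gf gradB : (Fin n → ℝ) → Fin n → ℝ} {μ Lf LB : ℝ} (hμ : 0 ≤ μ)
    (hf : ∀ t ∈ Set.Icc (0 : ℝ) 1, HasDotGradientAt f (Gf (x + t • d)) (x + t • d))
    (hB : ∀ t ∈ Set.Icc (0 : ℝ) 1, HasDotGradientAt B (gradB (x + t • d)) (x + t • d))
    (hGf : ∀ t ∈ Set.Icc (0 : ℝ) 1, dualNorm H (Gf (x + t • d) - Gf x) ≤ Lf * locNorm H (t • d))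
    (hgradB : ∀ t ∈ Set.Icc (0 : ℝ) 1,
      dualNorm H (gradB (x + t • d) - gradB x) ≤ LB * locNorm H (t • d)) :
    phiMu f B μ (x + d) ≤ phiMu f B μ x + gradPhiMu Gf gradB μ x ⬝ᵥ d
      + ((1 + μ) * Lf + μ * LB) / 2 * locNorm H d ^ 2 := by
  refine le_add_of_dualNorm_gradient_sub_le hH (fun t ht ↦ (hf t ht).phiMu (hB t ht) μ)
    fun t ht ↦ ?_
  set y := x + t • d
  calc dualNorm H (gradPhiMu Gf gradB μ y - gradPhiMu Gf gradB μ x)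
      = dualNorm H ((1 + μ) • (Gf y - Gf x) + μ • (gradB y - gradB x)) := by
        congr 1
        simp only [gradPhiMu]
        module
    _ ≤ (1 + μ) * dualNorm H (Gf y - Gf x) + μ * dualNorm H (gradB y - gradB x) := by
        rw [← dualNorm_smul_of_nonneg H (by positivity), ← dualNorm_smul_of_nonneg H hμ]
        exact dualNorm_add_le hH.posSemidef _ _
    _ ≤ (1 + μ) * (Lf * locNorm H (t • d)) + μ * (LB * locNorm H (t • d)) := by
        gcongr
        exacts [hGf t ht, hgradB t ht]
    _ = ((1 + μ) * Lf + μ * LB) * locNorm H (t • d) := by ring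

end Descent

section Step

variable {n : ℕ} {H : Matrix (Fin n) (Fin n) ℝ} {g : Fin n → ℝ} {η : ℝ}

/-- The normalized steepest descent step: the minimizer of `g ⬝ᵥ d` over the local ball
`‖d‖ₓ ≤ η`. For `g = 0` the division by zero makes the step `0`. -/
def descentStep (H : Matrix (Fin n) (Fin n) ℝ) (η : ℝ) (g : Fin n → ℝ) : Fin n → ℝ :=
  -((η / dualNorm H g) • (H⁻¹ *ᵥ g))

theorem locNorm_descentStep (hH : H.PosDef) (hη : 0 ≤ η) (hg : g ≠ 0) :
    locNorm H (descentStep H η g) = η := by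
  have hpos := dualNorm_pos hH hg
  rw [descentStep, ← neg_smul, locNorm_smul, locNorm_inv_mulVec hH.isUnit, abs_neg,
    abs_of_nonneg (by positivity), div_mul_cancel₀ η hpos.ne']

theorem dotProduct_descentStep (hH : H.PosSemidef) (η : ℝ) (g : Fin n → ℝ) :
    g ⬝ᵥ descentStep H η g = -(η * dualNorm H g) := by
  rw [descentStep, dotProduct_neg, dotProduct_smul, ← dualNorm_sq hH, smul_eq_mul,
    div_mul_eq_mul_div, mul_div_assoc, sq, mul_self_div_self]

theorem dotProduct_descentStep_le (hH : H.PosDef) (hη : 0 ≤ η) (hg : g ≠ 0) (u : Fin n → ℝ) :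
    u ⬝ᵥ descentStep H η g ≤ -(η * dualNorm H u) + 2 * η * dualNorm H (u - g) := by
  have hpair : (u - g) ⬝ᵥ descentStep H η g ≤ dualNorm H (u - g) * η := by
    simpa only [locNorm_descentStep hH hη hg] using
      le_of_abs_le (abs_dotProduct_le_dualNorm_mul_locNorm hH (u - g) (descentStep H η g))
  have htri : η * dualNorm H u ≤ η * (dualNorm H g + dualNorm H (u - g)) := by
    gcongr
    simpa only [add_sub_cancel] using dualNorm_add_le hH.posSemidef g (u - g)
  rw [sub_dotProduct, dotProduct_descentStep hH.posSemidef] at hpair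
  linarith

theorem gradPhiMu_dotProduct_descentStep_le {m : ℕ} (hH : H.PosDef) (hη : 0 ≤ η) {μ : ℝ}
    (hμ : 0 ≤ μ) (Gf gradB : (Fin n → ℝ) → Fin n → ℝ) (x p : Fin n → ℝ)
    {A : Matrix (Fin m) (Fin n) ℝ} {l : Fin m → ℝ}
    (hg : g = p + μ • (p + gradB x) + Aᵀ *ᵥ l) (hg0 : g ≠ 0)
    (hA : A *ᵥ descentStep H η g = 0) :
    gradPhiMu Gf gradB μ x ⬝ᵥ descentStep H η g ≤
      -(η * dualNorm H (gradPhiMu Gf gradB μ x + Aᵀ *ᵥ l))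
        + 2 * (1 + μ) * η * dualNorm H (Gf x - p) := by
  have hsub : gradPhiMu Gf gradB μ x + Aᵀ *ᵥ l - g = (1 + μ) • (Gf x - p) := by
    rw [hg, gradPhiMu]
    module
  have horth : (Aᵀ *ᵥ l) ⬝ᵥ descentStep H η g = 0 := by
    rw [mulVec_transpose, ← dotProduct_mulVec, hA, dotProduct_zero]
  have h := dotProduct_descentStep_le hH hη hg0 (gradPhiMu Gf gradB μ x + Aᵀ *ᵥ l)
  rw [add_dotProduct, horth, hsub, dualNorm_smul_of_nonneg H (by positivity)] at h
  linarith

end Step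

section Feasibility

/-- The multiplier `λ = -(A H⁻¹ Aᵀ)⁻¹ A H⁻¹ v` minimizing `‖v + Aᵀ λ‖ₓ*`; equivalently,
`H⁻¹ (v + Aᵀ λ) ∈ ker A`. The outer inverse is the junk value `0` unless `A H⁻¹ Aᵀ` is
invertible. -/
def leastSquaresMultiplier {ι κ : Type*} [Fintype ι] [Fintype κ] [DecidableEq ι] [DecidableEq κ]
    (A : Matrix κ ι ℝ) (H : Matrix ι ι ℝ) (v : ι → ℝ) : κ → ℝ :=
  -((A * H⁻¹ * Aᵀ)⁻¹ *ᵥ ((A * H⁻¹) *ᵥ v))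

theorem vecMul_injective_of_rank_eq_card {κ ι K : Type*} [Fintype κ] [Fintype ι] [Field K]
    {A : Matrix κ ι K} (hA : A.rank = Fintype.card κ) : Function.Injective A.vecMul := by
  rw [vecMul_injective_iff, linearIndependent_iff_card_eq_finrank_span, Set.finrank,
    ← rank_eq_finrank_span_row, hA]

theorem mulVec_inv_mulVec_add_leastSquaresMultiplier {ι κ : Type*} [Fintype ι] [Fintype κ]
    [DecidableEq ι] [DecidableEq κ] {A : Matrix κ ι ℝ} {H : Matrix ι ι ℝ}
    (hA : A.rank = Fintype.card κ) (hH : H.PosDef) (v : ι → ℝ) :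
    A *ᵥ H⁻¹ *ᵥ (v + Aᵀ *ᵥ leastSquaresMultiplier A H v) = 0 := by
  have hpos : (A * H⁻¹ * Aᵀ).PosDef := by
    simpa only [conjTranspose_eq_transpose_of_trivial] using
      hH.inv.mul_mul_conjTranspose_same (vecMul_injective_of_rank_eq_card hA)
  rw [leastSquaresMultiplier, mulVec_mulVec, mulVec_add, mulVec_mulVec, mulVec_neg,
    mulVec_inv_mulVec hpos.isUnit, add_neg_cancel]

variable {n m : ℕ} {A : Matrix (Fin m) (Fin n) ℝ} {H : Matrix (Fin n) (Fin n) ℝ}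

theorem mulVec_descentStep_add_leastSquaresMultiplier (hA : A.rank = m) (hH : H.PosDef) (η : ℝ)
    (v : Fin n → ℝ) : A *ᵥ descentStep H η (v + Aᵀ *ᵥ leastSquaresMultiplier A H v) = 0 := by
  rw [descentStep, mulVec_neg, mulVec_smul,
    mulVec_inv_mulVec_add_leastSquaresMultiplier (by rwa [Fintype.card_fin]) hH, smul_zero,
    neg_zero]

theorem add_smul_mem_strictFeas {K : Set (Fin n → ℝ)} {b : Fin m → ℝ} {x d : Fin n → ℝ}
    (hx : x ∈ strictFeas K A b) (hDikin : ∀ y, locNorm H (y - x) < 1 → y ∈ interior K)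
    (hd : locNorm H d < 1) (hAd : A *ᵥ d = 0) {t : ℝ} (ht : t ∈ Set.Icc (0 : ℝ) 1) :
    x + t • d ∈ strictFeas K A b := by
  refine ⟨hDikin _ ?_, ?_⟩
  · rw [add_sub_cancel_left]
    exact (locNorm_smul_le H ht d).trans_lt hd
  · rw [mulVec_add, mulVec_smul, hAd, smul_zero, add_zero, hx.2]

end Feasibility

theorem descent_error_le_of_le_one {μ η E Lf LB : ℝ} (hμ : μ ≤ 1) (hη : 0 ≤ η) (hE : 0 ≤ E)
    (hLf : 0 ≤ Lf) (hLB : 0 ≤ LB) :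
    2 * (1 + μ) * η * E + ((1 + μ) * Lf + μ * LB) / 2 * η ^ 2 ≤
      4 * η * E + (2 * Lf + LB) / 2 * η ^ 2 := by
  gcongr
  · linarith
  · linarith
  · exact mul_le_of_le_one_left hLB hμ

theorem stmt18_general {n m : ℕ} (K : Set (Fin n → ℝ))
    (B : (Fin n → ℝ) → ℝ) (gradB : (Fin n → ℝ) → Fin n → ℝ)
    (hessB : (Fin n → ℝ) → Matrix (Fin n) (Fin n) ℝ)
    (hBpos : ∀ x ∈ interior K, (hessB x).PosDef)
    (hB' : ∀ x ∈ interior K, HasDotGradientAt B (gradB x) x)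
    (hDikin : ∀ x ∈ interior K, ∀ y : Fin n → ℝ,
      locNorm (hessB x) (y - x) < 1 → y ∈ interior K)
    (A : Matrix (Fin m) (Fin n) ℝ) (b : Fin m → ℝ) (hA : A.rank = m)
    (f : (Fin n → ℝ) → ℝ) (Gf : (Fin n → ℝ) → Fin n → ℝ)
    (hf' : ∀ x ∈ strictFeas K A b, HasDotGradientAt f (Gf x) x)
    (s Lf LB : ℝ) (hs1 : s < 1)
    (hBLip : ∀ x ∈ interior K, ∀ y ∈ interior K, locNorm (hessB x) (y - x) ≤ s →
      dualNorm (hessB x) (gradB y - gradB x) ≤ LB * locNorm (hessB x) (y - x))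
    (hGfLip : ∀ x ∈ strictFeas K A b, ∀ y ∈ strictFeas K A b, locNorm (hessB x) (y - x) ≤ s →
      dualNorm (hessB x) (Gf y - Gf x) ≤ Lf * locNorm (hessB x) (y - x))
    (η μ : ℕ → ℝ) (hη0 : ∀ k, 0 ≤ η k) (hηs : ∀ k, η k ≤ s) (hμ0 : ∀ k, 0 ≤ μ k)
    (x mbar mk : ℕ → Fin n → ℝ) (lam : ℕ → Fin m → ℝ)
    (hx0 : x 0 ∈ strictFeas K A b)
    (hmk : ∀ k, mk k = mbar k + μ k • (mbar k + gradB (x k)))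
    (hlam : ∀ k, lam k = leastSquaresMultiplier A (hessB (x k)) (mk k))
    (hnz : ∀ k, mk k + Aᵀ *ᵥ lam k ≠ 0)
    (hstep : ∀ k, x (k + 1) = x k + descentStep (hessB (x k)) (η k) (mk k + Aᵀ *ᵥ lam k))
    (k : ℕ) :
    phiMu f B (μ k) (x (k + 1)) ≤ phiMu f B (μ k) (x k)
      - η k * dualNorm (hessB (x k)) (gradPhiMu Gf gradB (μ k) (x k) + Aᵀ *ᵥ lam k)
      + 2 * (1 + μ k) * η k * dualNorm (hessB (x k)) (Gf (x k) - mbar k)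
      + ((1 + μ k) * Lf + μ k * LB) / 2 * η k ^ 2 := by
  set d := fun k ↦ descentStep (hessB (x k)) (η k) (mk k + Aᵀ *ᵥ lam k)
  have hd (k) (hk : x k ∈ strictFeas K A b) : locNorm (hessB (x k)) (d k) = η k :=
    locNorm_descentStep (hBpos _ hk.1) (hη0 k) (hnz k)
  have hAd (k) (hk : x k ∈ strictFeas K A b) : A *ᵥ d k = 0 := by
    simpa only [d, hlam k] using mulVec_descentStep_add_leastSquaresMultiplier hA (hBpos _ hk.1) _ _
  have hseg (k) (hk : x k ∈ strictFeas K A b) (t : ℝ) (ht : t ∈ Set.Icc (0 : ℝ) 1) :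
      x k + t • d k ∈ strictFeas K A b :=
    add_smul_mem_strictFeas hk (hDikin _ hk.1)
      ((hd k hk).trans_lt ((hηs k).trans_lt hs1)) (hAd k hk) ht
  have hfeas (k) : x k ∈ strictFeas K A b := by
    induction k with
    | zero => exact hx0
    | succ k ih => simpa only [hstep, one_smul] using hseg k ih 1 (Set.right_mem_Icc.2 zero_le_one)
  have hnear (t : ℝ) (ht : t ∈ Set.Icc (0 : ℝ) 1) : locNorm (hessB (x k)) (t • d k) ≤ s :=
    (locNorm_smul_le _ ht _).trans ((hd k (hfeas k)).trans_le (hηs k))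
  have hH := hBpos _ (hfeas k).1
  have hseg := hseg k (hfeas k)
  have hquad := phiMu_add_le hH (hμ0 k) (fun t ht ↦ hf' _ (hseg t ht))
    (fun t ht ↦ hB' _ (hseg t ht).1)
    (fun t ht ↦ by simpa using hGfLip _ (hfeas k) _ (hseg t ht) (by simpa using hnear t ht))
    (fun t ht ↦ by simpa using hBLip _ (hfeas k).1 _ (hseg t ht).1 (by simpa using hnear t ht))
  have hlin := gradPhiMu_dotProduct_descentStep_le hH (hη0 k) (hμ0 k) Gf gradB (x k) (mbar k)
    (by rw [hmk k]) (hnz k) (hAd k (hfeas k))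
  rw [hd k (hfeas k)] at hquad
  rw [hstep k]
  linarith

/-- **Lemma 11**: one-step descent of the perturbed barrier function along Algorithm 1. -/
theorem stmt18 {n m : ℕ}
    (Kc : Set (Fin n → ℝ))
    (hKconv : Convex ℝ Kc) (hKclosed : IsClosed Kc)
    (hKcone : ∀ t : ℝ, 0 < t → ∀ x ∈ Kc, t • x ∈ Kc)
    (hKpointed : ∀ x : Fin n → ℝ, x ∈ Kc → -x ∈ Kc → x = 0)
    (hKint : (interior Kc).Nonempty)
    (Bf : (Fin n → ℝ) → ℝ) (gradB : (Fin n → ℝ) → Fin n → ℝ)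
    (hessB : (Fin n → ℝ) → Matrix (Fin n) (Fin n) ℝ)
    (hBpos : ∀ x ∈ interior Kc, (hessB x).PosDef)
    (hB' : ∀ x ∈ interior Kc, ∃ L : (Fin n → ℝ) →L[ℝ] ℝ,
      HasFDerivAt Bf L x ∧ ∀ v, L v = gradB x ⬝ᵥ v)
    (hDikin : ∀ x ∈ interior Kc, ∀ y : Fin n → ℝ,
      locNorm (hessB x) (y - x) < 1 → y ∈ interior Kc)
    (hBLip : ∀ s : ℝ, 0 < s → s < 1 → ∀ x ∈ interior Kc, ∀ y ∈ interior Kc,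
      locNorm (hessB x) (y - x) ≤ s →
      dualNorm (hessB x) (gradB y - gradB x) ≤ locNorm (hessB x) (y - x) / (1 - s))
    (A : Matrix (Fin m) (Fin n) ℝ) (b : Fin m → ℝ) (hA : A.rank = m)
    (f : (Fin n → ℝ) → ℝ) (Gf : (Fin n → ℝ) → Fin n → ℝ)
    (hf' : ∀ x ∈ strictFeas Kc A b, ∃ L : (Fin n → ℝ) →L[ℝ] ℝ,
      HasFDerivAt f L x ∧ ∀ v, L v = Gf x ⬝ᵥ v)
    (sη : ℝ) (hsη0 : 0 < sη) (hsη1 : sη < 1)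
    (L1 : ℝ) (hL1 : 0 < L1)
    (hGfLip : ∀ x ∈ strictFeas Kc A b, ∀ y ∈ strictFeas Kc A b,
      locNorm (hessB x) (y - x) ≤ sη →
      dualNorm (hessB x) (Gf y - Gf x) ≤ L1 * locNorm (hessB x) (y - x))
    (η μk : ℕ → ℝ)
    (hηpos : ∀ k, 0 < η k) (hηle : ∀ k, η k ≤ sη)
    (hμpos : ∀ k, 0 < μk k) (hμle : ∀ k, μk k ≤ 1)
    (x mbar mk : ℕ → Fin n → ℝ) (lam : ℕ → Fin m → ℝ)
    (hx0 : x 0 ∈ strictFeas Kc A b)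
    (hmk : ∀ k, mk k = mbar k + μk k • (mbar k + gradB (x k)))
    (hlam : ∀ k, lam k =
      -((A * (hessB (x k))⁻¹ * Aᵀ)⁻¹ *ᵥ ((A * (hessB (x k))⁻¹) *ᵥ mk k)))
    (hnz : ∀ k, mk k + Aᵀ *ᵥ lam k ≠ 0)
    (hstep : ∀ k, x (k + 1) = x k -
      (η k / dualNorm (hessB (x k)) (mk k + Aᵀ *ᵥ lam k)) •
        ((hessB (x k))⁻¹ *ᵥ (mk k + Aᵀ *ᵥ lam k))) :
    ∀ k : ℕ,
      phiMu f Bf (μk k) (x (k + 1)) ≤ phiMu f Bf (μk k) (x k)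
        - η k * dualNorm (hessB (x k))
            (gradPhiMu Gf gradB (μk k) (x k) + Aᵀ *ᵥ lam k)
        + 4 * η k * dualNorm (hessB (x k)) (Gf (x k) - mbar k)
        + ((2 * L1 + 1 / (1 - sη)) / 2) * η k ^ 2 := by
  intro k
  have hLB : 0 ≤ 1 / (1 - sη) := one_div_nonneg.2 (sub_nonneg.2 hsη1.le)
  have hdescent := stmt18_general Kc Bf gradB hessB hBpos hB' hDikin A b hA f Gf hf' sη L1
    (1 / (1 - sη)) hsη1
    (fun x hx y hy h ↦ (hBLip sη hsη0 hsη1 x hx y hy h).trans_eq (one_div_mul_eq_div _ _).symm)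
    hGfLip η μk (fun k ↦ (hηpos k).le) hηle (fun k ↦ (hμpos k).le) x mbar mk lam hx0 hmk hlam hnz
    (fun k ↦ (hstep k).trans (sub_eq_add_neg _ _)) k
  linarith [descent_error_le_of_le_one (hμle k) (hηpos k).le
    (dualNorm_nonneg (hessB (x k)) (Gf (x k) - mbar k)) hL1.le hLB]
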